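/- Let k ≥ 3, 1 ≤ ℓ ≤ k−1, a ≥ max{1, ℓ/(k−ℓ)} be integers, and suppose 0 < ε ≤ ℓ/(3a) and 1/n ≪ 1/C ≪ γ, 1/a, 1/k. Let G = 𝔾^{(k)}(n,p) on vertex set V, where p ≥ n^{−(k−ℓ)−ε} if ℓ ≥ 2 and p ≥ C·n^{−(k−1)} if ℓ = 1. Let L be a family of ℓ-subsets of V. Then for every pair of subsets R, V* ⊆ V with |V*| ≥ γn and |L ∩ binom(R,ℓ)| ≥ γn^ℓ, with probability at least 1 − exp(−3n), G contains a copy of the ℓ-path P_a whose two ℓ-ends both lie in L ∩ binom(R,ℓ) and all of whose other vertices lie in V*. Moreover, this property holds simultaneously for all choices of R and V* with probability 1 − o(1). -/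

import Mathlib

open Finset
open scoped Classical

/-- All `k`-subsets of `Fin n` (the possible edges of a `k`-graph on `n` vertices). -/
def kSets (n k : ℕ) : Finset (Finset (Fin n)) := Finset.univ.powersetCard k

/-- The probability that the binomial random `k`-graph `G^{(k)}(n,p)` (each `k`-set is an
edge independently with probability `p`) has an edge set satisfying the property `A`. -/
noncomputable def gProb (n k : ℕ) (p : ℝ) (A : Finset (Finset (Fin n)) → Prop) : ℝ :=
  ∑ E ∈ (kSets n k).powerset.filter (fun E => A E),
    p ^ E.card * (1 - p) ^ ((kSets n k).card - E.card)

/-- Expectation of a random variable `f` of the random `k`-graph `G^{(k)}(n,p)`. -/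
noncomputable def gExpect (n k : ℕ) (p : ℝ) (f : Finset (Finset (Fin n)) → ℝ) : ℝ :=
  ∑ E ∈ (kSets n k).powerset,
    p ^ E.card * (1 - p) ^ ((kSets n k).card - E.card) * f E

/-- The degree of a vertex set `S` in the `k`-graph with edge set `E`: the number of edges
containing `S` (equivalently, the number of `(k-|S|)`-sets `T` with `S ∪ T ∈ E`). -/
def degOf {n : ℕ} (E : Finset (Finset (Fin n))) (S : Finset (Fin n)) : ℕ :=
  (E.filter (fun e => S ⊆ e)).card

/-- The minimum vertex degree (minimum 1-degree) of a `k`-graph. -/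
noncomputable def minVertexDeg {n : ℕ} (E : Finset (Finset (Fin n))) : ℕ :=
  sInf {d : ℕ | ∃ v : Fin n, degOf E {v} = d}

/-- The index set of the `i`-th edge of the path `P_{a,x}`:
`{x + i*d, x + i*d + 1, …, x + i*d + k - 1}` (here `d = k - ℓ`). -/
def edgeIdx (k d x i : ℕ) : Finset ℕ := (Finset.range k).image (fun j => x + i * d + j)

/-- The ordered `b`-tuple `w` spans a labeled copy of `P_{a,x}` (the `k`-uniform `ℓ`-path
with `a` edges, preceded and followed by `x` isolated vertices) in the edge set `E`. -/
def SpansPax {n : ℕ} (k ℓ a x : ℕ) (E : Finset (Finset (Fin n))) {b : ℕ}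
    (w : Fin b → Fin n) : Prop :=
  Function.Injective w ∧
  ∀ i < a,
    ((Finset.univ.filter (fun m : Fin b => (m : ℕ) ∈ edgeIdx k (k - ℓ) x i)).image w) ∈ E

/-- The ordered tuple `w` spans a labeled copy of the `ℓ`-path `P_a` of length `a` in `E`. -/
def SpansPath {n : ℕ} (k ℓ a : ℕ) (E : Finset (Finset (Fin n))) {b : ℕ}
    (w : Fin b → Fin n) : Prop :=
  SpansPax k ℓ a 0 E w

/-- The first `ℓ`-end of the ordered tuple `w` (its first `ℓ` vertices, as a set). -/
def firstEnd {n b : ℕ} (ℓ : ℕ) (w : Fin b → Fin n) : Finset (Fin n) :=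
  (Finset.univ.filter (fun m : Fin b => (m : ℕ) < ℓ)).image w

/-- The last `ℓ`-end of the ordered tuple `w` (its last `ℓ` vertices, as a set). -/
def lastEnd {n b : ℕ} (ℓ : ℕ) (w : Fin b → Fin n) : Finset (Fin n) :=
  (Finset.univ.filter (fun m : Fin b => b - ℓ ≤ (m : ℕ))).image w

/-- The `k`-graph with edge set `E` on vertex set `Fin n` contains a Hamiltonian `ℓ`-cycle:
there is a cyclic ordering of all `n` vertices such that each of the `n/(k-ℓ)` edges
consists of `k` consecutive vertices, consecutive edges overlapping in `ℓ` vertices. -/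
def IsHamCycle (n k ℓ : ℕ) (E : Finset (Finset (Fin n))) : Prop :=
  ∃ f : ZMod n → Fin n, Function.Bijective f ∧
    ∀ i < n / (k - ℓ),
      ((Finset.range k).image (fun j => f (((i * (k - ℓ) + j : ℕ) : ZMod n)))) ∈ E

/-- The `ℓ`-shadow of a `k`-graph: all `ℓ`-sets contained in some edge. -/
def shadowL {n : ℕ} (ℓ : ℕ) (E : Finset (Finset (Fin n))) : Finset (Finset (Fin n)) :=
  (Finset.univ.powersetCard ℓ).filter (fun S => ∃ e ∈ E, S ⊆ e)

/-- The list `v` of vertices spans a copy of the `ℓ`-path `P_a` of length `a` in `E`. -/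
def ListSpans {n : ℕ} (k ℓ a : ℕ) (E : Finset (Finset (Fin n))) (v : List (Fin n)) : Prop :=
  v.Nodup ∧ v.length = a * (k - ℓ) + ℓ ∧
    ∀ i < a, ((v.drop (i * (k - ℓ))).take k).toFinset ∈ E

/-- `Φ_F(n,p) = min { n^{v_H} p^{e_H} : H ⊆ F, e_H > 0 }`, where the subgraph `H` is given
by a nonempty edge set `E' ⊆ F` together with a vertex set `W` containing all its edges. -/
noncomputable def Phi {V : Type*} (n : ℕ) (p : ℝ) (F : Finset (Finset V)) : ℝ :=
  sInf {r : ℝ | ∃ (W : Finset V) (E' : Finset (Finset V)),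
    E' ⊆ F ∧ E'.Nonempty ∧ (∀ e ∈ E', e ⊆ W) ∧ r = (n : ℝ) ^ W.card * p ^ E'.card}

/-- The ordered tuple `w` spans a labeled copy of the `k`-graph `F` (given by its edge set
`Fe` on vertex set `Fin s`) in the edge set `E`. -/
def SpansCopy {n s : ℕ} (Fe : Finset (Finset (Fin s))) (E : Finset (Finset (Fin n)))
    (w : Fin s → Fin n) : Prop :=
  ∀ e ∈ Fe, e.image w ∈ E

/-- Concatenation of three ordered tuples. -/
def concat3 {n p q r : ℕ} (A : Fin p → Fin n) (C : Fin q → Fin n) (B : Fin r → Fin n)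
    (m : Fin (p + q + r)) : Fin n :=
  if h : (m : ℕ) < p then A ⟨(m : ℕ), h⟩
  else if h2 : (m : ℕ) < p + q then C ⟨(m : ℕ) - p, by omega⟩
  else B ⟨(m : ℕ) - (p + q), by have := m.isLt; omega⟩

/-- `w`, spanning an `ℓ`-path of length `a`, is a `W`-absorber in `E`: it avoids `W`, and
its vertex set together with `W` spans an `ℓ`-path (of length `a+1` when `|W| = k - ℓ`)
with the same two `ℓ`-ends. -/
def IsAbsorber {n : ℕ} (k ℓ a : ℕ) (E : Finset (Finset (Fin n))) {b : ℕ}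
    (w : Fin b → Fin n) (W : Finset (Fin n)) : Prop :=
  (∀ m, w m ∉ W) ∧
  ∃ w' : Fin (b + W.card) → Fin n, SpansPath k ℓ (a + 1) E w' ∧
    Finset.image w' Finset.univ = Finset.image w Finset.univ ∪ W ∧
    firstEnd ℓ w' = firstEnd ℓ w ∧ lastEnd ℓ w' = lastEnd ℓ w


/-- A copy of the `ℓ`-path `P_a` both of whose `ℓ`-ends lie in `L ∩ binom(R,ℓ)` and all of
whose remaining vertices lie in `Vs`. -/
def GoodPath {n : ℕ} (k ℓ a : ℕ) (L : Finset (Finset (Fin n))) (R Vs : Finset (Fin n))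
    (E : Finset (Finset (Fin n))) : Prop :=
  ∃ w : Fin (a * (k - ℓ) + ℓ) → Fin n, SpansPath k ℓ a E w ∧
    firstEnd ℓ w ∈ L ∧ firstEnd ℓ w ⊆ R ∧ lastEnd ℓ w ∈ L ∧ lastEnd ℓ w ⊆ R ∧
    ∀ m : Fin (a * (k - ℓ) + ℓ), ℓ ≤ (m : ℕ) → (m : ℕ) < a * (k - ℓ) → w m ∈ Vs

/-!
Fix `R` and `V*`. A positive proportion of all vertex tuples have both `ℓ`-ends in `L ∩ binom(R, ℓ)`
and the remaining entries in `V*`. Janson's inequality, applied to the copies of `P_a` spanned by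
these tuples, bounds the probability that none of them appears by `exp (-c Φ)`, where `c > 0`
depends only on `k`, `ℓ`, `a` and `γ`, and `Φ` is, up to constants, the least expected number of
copies of a nonempty subgraph of `P_a`. A subgraph with `e` edges has at least `e (k - ℓ) + ℓ`
vertices: listing the edges from left to right, each new one contains `k - ℓ` vertices to the right
of all previous ones. Hence for `p ≥ C n ^ (-(k - ℓ) - (ℓ - 1) / a)` and `C ≥ 1` its expected number
of copies is at least `C ^ e n ^ (ℓ - e (ℓ - 1) / a) ≥ C n`, so `c Φ ≥ 3 n` as soon as `c C ≥ 3`.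
This threshold is `C n ^ (-(k - 1))` for `ℓ = 1`, and for `ℓ ≥ 2` and large `n` it lies below
`n ^ (-(k - ℓ) - ε)`, since then `ℓ / 3 < ℓ - 1`. There are only `4 ^ n` pairs `(R, V*)`, so the
bound `exp (-3 n)` survives a union bound over them.
-/

section RandomSubset

variable {α ι : Type*} {Ω : Finset α} {p : ℝ}

/-- Expectation over the binomial random subset of `Ω`, which contains each element of `Ω`
independently with probability `p`, as a linear functional of the random variable. -/
noncomputable def randomSubsetExpect (Ω : Finset α) (p : ℝ) : (Finset α → ℝ) →ₗ[ℝ] ℝ :=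
  ∑ E ∈ Ω.powerset, (p ^ #E * (1 - p) ^ (#Ω - #E)) • LinearMap.proj E

lemma randomSubsetExpect_apply (f : Finset α → ℝ) :
    randomSubsetExpect Ω p f = ∑ E ∈ Ω.powerset, p ^ #E * (1 - p) ^ (#Ω - #E) * f E := by
  simp [randomSubsetExpect]

lemma randomSubsetExpect_const (c : ℝ) : randomSubsetExpect Ω p (fun _ => c) = c := by
  rw [randomSubsetExpect_apply, ← sum_mul, sum_pow_mul_eq_add_pow, add_sub_cancel, one_pow,
    one_mul]

lemma randomSubsetExpect_mono (h0 : 0 ≤ p) (h1 : p ≤ 1) {f g : Finset α → ℝ}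
    (h : ∀ E ⊆ Ω, f E ≤ g E) : randomSubsetExpect Ω p f ≤ randomSubsetExpect Ω p g := by
  simp only [randomSubsetExpect_apply]
  have : 0 ≤ 1 - p := sub_nonneg.2 h1
  gcongr with E hE
  exact h E (mem_powerset.1 hE)

lemma exists_subset_randomSubsetExpect_le (h0 : 0 ≤ p) (h1 : p ≤ 1) (f : Finset α → ℝ) :
    ∃ E ⊆ Ω, randomSubsetExpect Ω p f ≤ f E := by
  obtain ⟨E, hE, hmax⟩ := Ω.powerset.exists_max_image f (powerset_nonempty Ω)
  refine ⟨E, mem_powerset.1 hE, ?_⟩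
  calc randomSubsetExpect Ω p f ≤ randomSubsetExpect Ω p (fun _ => f E) :=
        randomSubsetExpect_mono h0 h1 fun E' hE' => hmax E' (mem_powerset.2 hE')
    _ = f E := randomSubsetExpect_const _

lemma randomSubsetExpect_ite_mem [DecidableEq α] {x : α} (hx : x ∈ Ω) (g : Finset α → ℝ) :
    randomSubsetExpect Ω p (fun E => if x ∈ E then g E else 0)
      = p * randomSubsetExpect Ω p (fun E => g (insert x E)) := by
  obtain ⟨Ω', hx', rfl⟩ : ∃ Ω', x ∉ Ω' ∧ insert x Ω' = Ω :=
    ⟨Ω.erase x, notMem_erase x Ω, insert_erase hx⟩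
  simp only [randomSubsetExpect_apply, sum_powerset_insert hx', ← sum_add_distrib, mul_sum]
  refine sum_congr rfl fun E hE => ?_
  have hEΩ : E ⊆ Ω' := mem_powerset.1 hE
  have hxE : x ∉ E := fun h => hx' (hEΩ h)
  have hcard : #Ω' + 1 - #E = #Ω' - #E + 1 := Nat.sub_add_comm (card_le_card hEΩ)
  simp only [hxE, if_false, mem_insert_self, if_true, card_insert_of_notMem hx',
    card_insert_of_notMem hxE, insert_idem, Nat.add_sub_add_right, hcard]
  ring

lemma randomSubsetExpect_ite_subset [DecidableEq α] {T : Finset α} (hT : T ⊆ Ω)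
    (g : Finset α → ℝ) :
    randomSubsetExpect Ω p (fun E => if T ⊆ E then g E else 0)
      = p ^ #T * randomSubsetExpect Ω p (fun E => g (E ∪ T)) := by
  induction T using Finset.induction_on generalizing g with
  | empty => simp
  | insert x T hx ih =>
    rw [insert_subset_iff] at hT
    calc randomSubsetExpect Ω p (fun E => if insert x T ⊆ E then g E else 0)
        = randomSubsetExpect Ω p (fun E => if x ∈ E then (if T ⊆ E then g E else 0) else 0) := by
          simp only [insert_subset_iff, ite_and]
      _ = p * randomSubsetExpect Ω p (fun E => if T ⊆ E then g (insert x E) else 0) := by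
          rw [randomSubsetExpect_ite_mem hT.1]
          simp only [subset_insert_iff_of_notMem hx]
      _ = p ^ #(insert x T) * randomSubsetExpect Ω p (fun E => g (E ∪ insert x T)) := by
          rw [ih hT.2, card_insert_of_notMem hx, pow_succ', mul_assoc]
          simp only [union_insert]

/-- Probability that the binomial random subset of `Ω` satisfies `A`. -/
noncomputable def randomSubsetProb (Ω : Finset α) (p : ℝ) (A : Finset α → Prop) : ℝ :=
  randomSubsetExpect Ω p (fun E => if A E then 1 else 0)

lemma randomSubsetProb_mono (h0 : 0 ≤ p) (h1 : p ≤ 1) {A B : Finset α → Prop}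
    (h : ∀ E, A E → B E) : randomSubsetProb Ω p A ≤ randomSubsetProb Ω p B :=
  randomSubsetExpect_mono h0 h1 fun E _ => by
    by_cases hA : A E
    · simp [hA, h E hA]
    · rw [if_neg hA]
      positivity

lemma randomSubsetProb_nonneg (h0 : 0 ≤ p) (h1 : p ≤ 1) (A : Finset α → Prop) :
    0 ≤ randomSubsetProb Ω p A := by
  rw [← randomSubsetExpect_const (Ω := Ω) (p := p) 0]
  exact randomSubsetExpect_mono h0 h1 fun E _ => by positivity

lemma randomSubsetProb_le_one (h0 : 0 ≤ p) (h1 : p ≤ 1) (A : Finset α → Prop) :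
    randomSubsetProb Ω p A ≤ 1 := by
  rw [← randomSubsetExpect_const (Ω := Ω) (p := p) 1]
  exact randomSubsetExpect_mono h0 h1 fun E _ => by split_ifs <;> norm_num

lemma randomSubsetProb_and_not (A B : Finset α → Prop) :
    randomSubsetProb Ω p (fun E => A E ∧ ¬ B E)
      = randomSubsetProb Ω p A - randomSubsetProb Ω p (fun E => B E ∧ A E) := by
  simp only [randomSubsetProb]
  rw [← map_sub]
  congr 1
  ext E
  by_cases hA : A E <;> by_cases hB : B E <;> simp [hA, hB]

lemma randomSubsetProb_eq_one_sub (A : Finset α → Prop) :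
    randomSubsetProb Ω p A = 1 - randomSubsetProb Ω p (fun E => ¬ A E) := by
  refine eq_sub_of_add_eq (Eq.trans ?_ (randomSubsetExpect_const (Ω := Ω) (p := p) 1))
  rw [randomSubsetProb, randomSubsetProb, ← map_add]
  congr 1
  ext E
  by_cases hA : A E <;> simp [hA]

lemma randomSubsetProb_or_le (h0 : 0 ≤ p) (h1 : p ≤ 1) (A B : Finset α → Prop) :
    randomSubsetProb Ω p (fun E => A E ∨ B E)
      ≤ randomSubsetProb Ω p A + randomSubsetProb Ω p B := by
  simp only [randomSubsetProb]
  rw [← map_add]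
  refine randomSubsetExpect_mono h0 h1 fun E _ => ?_
  by_cases hA : A E <;> by_cases hB : B E <;> simp [hA, hB]

lemma randomSubsetProb_exists_mem_le (h0 : 0 ≤ p) (h1 : p ≤ 1) (J : Finset ι)
    (A : ι → Finset α → Prop) :
    randomSubsetProb Ω p (fun E => ∃ j ∈ J, A j E) ≤ ∑ j ∈ J, randomSubsetProb Ω p (A j) := by
  induction J using Finset.induction_on with
  | empty => simp [randomSubsetProb, randomSubsetExpect_const]
  | insert j J hj ih =>
    simp only [exists_mem_insert, sum_insert hj]
    exact (randomSubsetProb_or_le h0 h1 _ _).trans (by gcongr)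

lemma le_randomSubsetProb_forall_mem (h0 : 0 ≤ p) (h1 : p ≤ 1) {J : Finset ι}
    {A : ι → Finset α → Prop} {δ : ℝ} (hA : ∀ j ∈ J, 1 - δ ≤ randomSubsetProb Ω p (A j)) :
    1 - #J * δ ≤ randomSubsetProb Ω p (fun E => ∀ j ∈ J, A j E) := by
  rw [randomSubsetProb_eq_one_sub]
  gcongr
  calc randomSubsetProb Ω p (fun E => ¬ ∀ j ∈ J, A j E)
      ≤ ∑ j ∈ J, randomSubsetProb Ω p (fun E => ¬ A j E) := by
        refine le_trans (randomSubsetProb_mono h0 h1 fun E hE => ?_)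
          (randomSubsetProb_exists_mem_le h0 h1 J fun j E => ¬ A j E)
        push Not at hE
        exact hE
    _ ≤ ∑ _ ∈ J, δ := sum_le_sum fun j hj => by
        linarith [hA j hj, randomSubsetProb_eq_one_sub (Ω := Ω) (p := p) (A j)]
    _ = #J * δ := by rw [sum_const, nsmul_eq_mul]

lemma randomSubsetProb_subset_and [DecidableEq α] {T : Finset α} (hT : T ⊆ Ω)
    (A : Finset α → Prop) :
    randomSubsetProb Ω p (fun E => T ⊆ E ∧ A E)
      = p ^ #T * randomSubsetProb Ω p (fun E => A (E ∪ T)) := by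
  rw [randomSubsetProb, randomSubsetProb,
    ← randomSubsetExpect_ite_subset hT fun E => if A E then 1 else 0]
  congr 1
  ext E
  by_cases hE : T ⊆ E <;> simp [hE]

lemma randomSubsetExpect_sum_ite_subset {T : ι → Finset α} {J : Finset ι}
    (hT : ∀ j ∈ J, T j ⊆ Ω) (c : ι → ℝ) :
    randomSubsetExpect Ω p (fun E => ∑ j ∈ J, if T j ⊆ E then c j else 0)
      = ∑ j ∈ J, p ^ #(T j) * c j := by
  calc randomSubsetExpect Ω p (fun E => ∑ j ∈ J, if T j ⊆ E then c j else 0)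
      = ∑ j ∈ J, randomSubsetExpect Ω p (fun E => if T j ⊆ E then c j else 0) := by
        rw [← map_sum]
        congr 1
        ext E
        simp
    _ = ∑ j ∈ J, p ^ #(T j) * c j := sum_congr rfl fun j hj => by
        rw [randomSubsetExpect_ite_subset (hT j hj) fun _ => c j, randomSubsetExpect_const]

end RandomSubset

section Janson

variable {α ι : Type*} {Ω : Finset α} {p : ℝ} {T : ι → Finset α}

/-- The event of Janson's inequality: the set `E` contains none of the sets `T i`, `i ∈ S`. -/
def Avoids (T : ι → Finset α) (S : Finset ι) (E : Finset α) : Prop := ∀ i ∈ S, ¬ T i ⊆ E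

variable [DecidableEq α]

/-- The summands of the variance-type term of Janson's inequality: the probability that `T i`
and `T j` both appear if they intersect, and `0` if they are disjoint. -/
def overlapProb (p : ℝ) (T : ι → Finset α) (i j : ι) : ℝ :=
  if Disjoint (T i) (T j) then 0 else p ^ #(T i ∪ T j)

lemma overlapProb_nonneg (h0 : 0 ≤ p) (i j : ι) : 0 ≤ overlapProb p T i j := by
  unfold overlapProb
  positivity

lemma overlapProb_self {i : ι} (hi : (T i).Nonempty) : overlapProb p T i i = p ^ #(T i) := by
  rw [overlapProb, if_neg fun h => hi.ne_empty (disjoint_self.1 h), union_idempotent]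

lemma avoids_union_iff {S : Finset ι} {U E : Finset α} (hU : ∀ j ∈ S, Disjoint U (T j)) :
    Avoids T S (E ∪ U) ↔ Avoids T S E :=
  forall₂_congr fun j hj => not_congr
    ⟨(hU j hj).symm.left_le_of_le_sup_right, fun h => h.trans subset_union_left⟩

lemma randomSubsetProb_subset_and_avoids_ge (h0 : 0 ≤ p) (h1 : p ≤ 1) {S : Finset ι} {i : ι}
    (hi : T i ⊆ Ω) (hS : ∀ j ∈ S, T j ⊆ Ω) :
    (p ^ #(T i) - ∑ j ∈ S, overlapProb p T i j)
        * randomSubsetProb Ω p (Avoids T {j ∈ S | Disjoint (T i) (T j)})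
      ≤ randomSubsetProb Ω p (fun E => T i ⊆ E ∧ Avoids T S E) := by
  set S₀ := {j ∈ S | Disjoint (T i) (T j)}
  set S₁ := {j ∈ S | ¬ Disjoint (T i) (T j)}
  have hmain : randomSubsetProb Ω p (fun E => T i ⊆ E ∧ Avoids T S₀ E)
      = p ^ #(T i) * randomSubsetProb Ω p (Avoids T S₀) := by
    rw [randomSubsetProb_subset_and hi]
    congr 2
    ext E
    exact avoids_union_iff fun j hj => (mem_filter.1 hj).2
  have hoverlap : ∀ j ∈ S₁, randomSubsetProb Ω p (fun E => T i ∪ T j ⊆ E ∧ Avoids T S₀ E)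
      ≤ overlapProb p T i j * randomSubsetProb Ω p (Avoids T S₀) := by
    intro j hj
    rw [mem_filter] at hj
    rw [randomSubsetProb_subset_and (union_subset hi (hS j hj.1)), overlapProb, if_neg hj.2]
    gcongr
    exact randomSubsetProb_mono h0 h1 fun E hE m hm hTm =>
      hE m hm (hTm.trans subset_union_left)
  have hcover : randomSubsetProb Ω p (fun E => T i ⊆ E ∧ Avoids T S₀ E)
      ≤ randomSubsetProb Ω p (fun E => T i ⊆ E ∧ Avoids T S E)
        + ∑ j ∈ S₁, randomSubsetProb Ω p (fun E => T i ∪ T j ⊆ E ∧ Avoids T S₀ E) := by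
    refine le_trans (randomSubsetProb_mono h0 h1 fun E hE => ?_)
      ((randomSubsetProb_or_le h0 h1 _ _).trans (add_le_add_right
        (randomSubsetProb_exists_mem_le h0 h1 S₁ _) _))
    by_cases hbad : ∃ j ∈ S₁, T j ⊆ E
    · obtain ⟨j, hj, hjE⟩ := hbad
      exact Or.inr ⟨j, hj, union_subset hE.1 hjE, hE.2⟩
    · refine Or.inl ⟨hE.1, fun j hj hjE => ?_⟩
      by_cases hd : Disjoint (T i) (T j)
      · exact hE.2 j (mem_filter.2 ⟨hj, hd⟩) hjE
      · exact hbad ⟨j, mem_filter.2 ⟨hj, hd⟩, hjE⟩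
  have hsum : ∑ j ∈ S₁, overlapProb p T i j = ∑ j ∈ S, overlapProb p T i j :=
    sum_filter_of_ne fun j _ hne hd => hne (if_pos hd)
  have hbound := hcover.trans (add_le_add_right (sum_le_sum hoverlap) _)
  rw [hmain, ← sum_mul, hsum] at hbound
  linarith

lemma randomSubsetProb_avoids_insert_le [DecidableEq ι] (h0 : 0 ≤ p) (h1 : p ≤ 1)
    {S : Finset ι} {i : ι} (hi : T i ⊆ Ω) (hS : ∀ j ∈ S, T j ⊆ Ω) :
    randomSubsetProb Ω p (Avoids T (insert i S)) ≤ randomSubsetProb Ω p (Avoids T S)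
      * Real.exp (-(p ^ #(T i) - ∑ j ∈ S, overlapProb p T i j)) := by
  set r := p ^ #(T i) - ∑ j ∈ S, overlapProb p T i j
  have hsplit : randomSubsetProb Ω p (Avoids T (insert i S))
      = randomSubsetProb Ω p (Avoids T S)
        - randomSubsetProb Ω p (fun E => T i ⊆ E ∧ Avoids T S E) := by
    rw [← randomSubsetProb_and_not]
    congr 1
    ext E
    rw [Avoids, forall_mem_insert, and_comm, Avoids]
  have hdrop : r * randomSubsetProb Ω p (Avoids T S)
      ≤ randomSubsetProb Ω p (fun E => T i ⊆ E ∧ Avoids T S E) := by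
    rcases le_total 0 r with hr0 | hr0
    · refine le_trans ?_ (randomSubsetProb_subset_and_avoids_ge h0 h1 hi hS)
      gcongr
      exact randomSubsetProb_mono h0 h1 fun E hE j hj => hE j (mem_filter.1 hj).1
    · exact (mul_nonpos_of_nonpos_of_nonneg hr0 (randomSubsetProb_nonneg h0 h1 _)).trans
        (randomSubsetProb_nonneg h0 h1 _)
  calc randomSubsetProb Ω p (Avoids T (insert i S))
      ≤ randomSubsetProb Ω p (Avoids T S) * (1 - r) := by linarith
    _ ≤ randomSubsetProb Ω p (Avoids T S) * Real.exp (-r) :=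
        mul_le_mul_of_nonneg_left (Real.one_sub_le_exp_neg r) (randomSubsetProb_nonneg h0 h1 _)

lemma sum_offDiag_add_sum_le_sum_offDiag_insert [DecidableEq ι] {F : ι × ι → ℝ}
    (hF : ∀ x, 0 ≤ F x) {S : Finset ι} {i : ι} (hi : i ∉ S) :
    ∑ x ∈ S.offDiag, F x + ∑ j ∈ S, F (i, j) ≤ ∑ x ∈ (insert i S).offDiag, F x := by
  have hdisj : Disjoint S.offDiag ({i} ×ˢ S) := by
    simp only [disjoint_left, mem_offDiag, mem_product, mem_singleton]
    rintro x ⟨hx, -⟩ ⟨rfl, -⟩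
    exact hi hx
  have hrow : ∑ j ∈ S, F (i, j) = ∑ x ∈ {i} ×ˢ S, F x := by rw [sum_product, sum_singleton]
  rw [hrow, ← sum_union hdisj]
  exact sum_le_sum_of_subset_of_nonneg (by grind) fun x _ _ => hF x

lemma randomSubsetProb_avoids_le_exp (h0 : 0 ≤ p) (h1 : p ≤ 1) {S : Finset ι}
    (hS : ∀ j ∈ S, T j ⊆ Ω) :
    randomSubsetProb Ω p (Avoids T S) ≤
      Real.exp (-(∑ i ∈ S, p ^ #(T i) - ∑ x ∈ S.offDiag, overlapProb p T x.1 x.2)) := by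
  induction S using Finset.induction_on with
  | empty => simpa using randomSubsetProb_le_one h0 h1 _
  | insert i S hi ih =>
    rw [forall_mem_insert] at hS
    refine (randomSubsetProb_avoids_insert_le h0 h1 hS.1 hS.2).trans ?_
    refine (mul_le_mul_of_nonneg_right (ih hS.2) (Real.exp_pos _).le).trans ?_
    rw [← Real.exp_add, sum_insert hi]
    have := sum_offDiag_add_sum_le_sum_offDiag_insert
      (F := fun x => overlapProb p T x.1 x.2) (fun x => overlapProb_nonneg h0 x.1 x.2) hi
    gcongr
    linarith

lemma exists_subset_sum_sub_sum_offDiag_ge {q : ℝ} (h0 : 0 ≤ q) (h1 : q ≤ 1)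
    (I : Finset ι) (f : ι → ℝ) (F : ι × ι → ℝ) :
    ∃ S ⊆ I, q * ∑ i ∈ I, f i - q ^ 2 * ∑ x ∈ I.offDiag, F x
      ≤ ∑ i ∈ S, f i - ∑ x ∈ S.offDiag, F x := by
  obtain ⟨S, hS, hle⟩ := exists_subset_randomSubsetExpect_le (Ω := I) h0 h1
    ((fun S : Finset ι => ∑ i ∈ I, if {i} ⊆ S then f i else 0)
      - fun S : Finset ι => ∑ x ∈ I.offDiag, if {x.1, x.2} ⊆ S then F x else 0)
  refine ⟨S, hS, ?_⟩
  rw [map_sub, Pi.sub_apply,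
    randomSubsetExpect_sum_ite_subset fun i hi => singleton_subset_iff.2 hi,
    randomSubsetExpect_sum_ite_subset fun x hx => ?_] at hle
  · convert hle using 2
    · simp [mul_sum]
    · rw [mul_sum]
      exact sum_congr rfl fun x hx => by rw [card_pair (mem_offDiag.1 hx).2.2]
    · rw [← sum_filter]
      congr 1
      grind
    · rw [← sum_filter]
      congr 1
      grind
  · rw [mem_offDiag] at hx
    exact insert_subset hx.1 (singleton_subset_iff.2 hx.2.1)

/-- Applying the bound `exp (-(μ - Δ))` to a random subfamily, containing each index with
probability `q`, replaces `μ - Δ` by `q * μ - q ^ 2 * Δ`; the choice `q = μ / (2 * D)` is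
optimal. -/
theorem janson_inequality (h0 : 0 ≤ p) (h1 : p ≤ 1) {I : Finset ι} (hI : ∀ i ∈ I, T i ⊆ Ω)
    {D : ℝ} (hD : ∑ i ∈ I, ∑ j ∈ I, overlapProb p T i j ≤ D) :
    randomSubsetProb Ω p (Avoids T I) ≤ Real.exp (-((∑ i ∈ I, p ^ #(T i)) ^ 2 / (4 * D))) := by
  by_cases hempty : ∃ i ∈ I, T i = ∅
  · obtain ⟨i, hi, hTi⟩ := hempty
    have hno : ∀ E, ¬ Avoids T I E := fun E hE => hE i hi (hTi ▸ empty_subset E)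
    simp only [randomSubsetProb, hno, if_false, randomSubsetExpect_const]
    positivity
  push Not at hempty
  set μ := ∑ i ∈ I, p ^ #(T i)
  set Δ := ∑ x ∈ I.offDiag, overlapProb p T x.1 x.2
  have hμΔ : μ + Δ ≤ D := by
    refine le_trans (le_of_eq ?_) hD
    rw [← sum_product', ← diag_union_offDiag, sum_union (disjoint_diag_offDiag I), sum_diag]
    congr 1
    exact sum_congr rfl fun i hi => (overlapProb_self (hempty i hi)).symm
  have hμ0 : 0 ≤ μ := sum_nonneg fun i _ => by positivity
  have hΔ0 : 0 ≤ Δ := sum_nonneg fun x _ => overlapProb_nonneg h0 x.1 x.2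
  have hD0 : 0 ≤ D := by linarith
  obtain ⟨S, hSI, hS⟩ := exists_subset_sum_sub_sum_offDiag_ge (q := μ / (2 * D)) (by positivity)
    (div_le_one_of_le₀ (by linarith) (by positivity)) I (fun i => p ^ #(T i))
    (fun x => overlapProb p T x.1 x.2)
  have hoptimal : μ ^ 2 / (4 * D) = μ / (2 * D) * μ - (μ / (2 * D)) ^ 2 * D := by
    rcases hD0.eq_or_lt with rfl | hDpos
    · simp
    · field_simp
      ring
  have hΔD : (μ / (2 * D)) ^ 2 * Δ ≤ (μ / (2 * D)) ^ 2 * D := by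
    gcongr
    linarith
  calc randomSubsetProb Ω p (Avoids T I) ≤ randomSubsetProb Ω p (Avoids T S) :=
        randomSubsetProb_mono h0 h1 fun E hE i hi => hE i (hSI hi)
    _ ≤ _ := randomSubsetProb_avoids_le_exp h0 h1 fun j hj => hI j (hSI hj)
    _ ≤ Real.exp (-(μ ^ 2 / (4 * D))) := Real.exp_le_exp.2 (by linarith)

end Janson

section HypergraphCopies

variable {β V : Type*} {p : ℝ} {F : Finset (Finset β)}

lemma Phi_le [DecidableEq β] (h0 : 0 ≤ p) (n : ℕ) {E : Finset (Finset β)} (hEF : E ⊆ F)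
    (hE : E.Nonempty) : Phi n p F ≤ (n : ℝ) ^ #(E.biUnion id) * p ^ #E := by
  refine csInf_le ⟨0, ?_⟩ ⟨_, E, hEF, hE, fun e he => subset_biUnion_of_mem id he, rfl⟩
  rintro r ⟨W, E', -, -, -, rfl⟩
  positivity

lemma Phi_nonneg (h0 : 0 ≤ p) (n : ℕ) (F : Finset (Finset β)) : 0 ≤ Phi n p F := by
  refine Real.sInf_nonneg ?_
  rintro r ⟨W, E, -, -, -, rfl⟩
  positivity

lemma le_Phi [DecidableEq β] (h0 : 0 ≤ p) {n : ℕ} (hn : 1 ≤ n) (hF : F.Nonempty) {r : ℝ}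
    (h : ∀ E ⊆ F, E.Nonempty → r ≤ (n : ℝ) ^ #(E.biUnion id) * p ^ #E) : r ≤ Phi n p F := by
  refine le_csInf ⟨_, F.biUnion id, F, Subset.rfl, hF, fun e he => subset_biUnion_of_mem id he,
    rfl⟩ ?_
  rintro _ ⟨W, E, hEF, hE, hW, rfl⟩
  refine (h E hEF hE).trans ?_
  gcongr
  · exact_mod_cast hn
  · exact biUnion_subset.2 hW

variable [DecidableEq V]

/-- The edges of the copy of the hypergraph `F` spanned by the vertex map `w`. -/
def copyEdges (F : Finset (Finset β)) (w : β → V) : Finset (Finset V) :=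
  F.image fun f => f.image w

lemma card_copyEdges (F : Finset (Finset β)) {w : β → V} (hw : w.Injective) :
    #(copyEdges F w) = #F :=
  card_image_of_injective _ (image_injective hw)

variable [Fintype β]

lemma overlapProb_copyEdges_le [DecidableEq β] (h0 : 0 ≤ p) {w w' : β → V} (hw : w.Injective)
    (hw' : w'.Injective) :
    overlapProb p (copyEdges F) w w' ≤ ∑ E ∈ F.powerset with E.Nonempty,
      if ∀ x ∈ E.biUnion id, w' x ∈ univ.image w then p ^ (2 * #F - #E) else 0 := by
  by_cases hdisj : Disjoint (copyEdges F w) (copyEdges F w')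
  · rw [overlapProb, if_pos hdisj]
    positivity
  set E := {f ∈ F | f.image w' ∈ copyEdges F w}
  have hinter : copyEdges F w ∩ copyEdges F w' = copyEdges E w' := by
    ext e
    simp only [copyEdges, E, mem_inter, mem_image, mem_filter]
    grind
  have hEne : E.Nonempty := by
    rw [not_disjoint_iff_nonempty_inter, hinter] at hdisj
    exact image_nonempty.1 hdisj
  have hcard : #(copyEdges F w ∪ copyEdges F w') = 2 * #F - #E := by
    rw [card_union, hinter, card_copyEdges F hw, card_copyEdges F hw', card_copyEdges E hw',
      two_mul]
  have himage : ∀ x ∈ E.biUnion id, w' x ∈ univ.image w := by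
    intro x hx
    obtain ⟨f, hf, hxf⟩ := mem_biUnion.1 hx
    obtain ⟨g, -, hg⟩ := mem_image.1 (mem_filter.1 hf).2
    exact image_subset_image (subset_univ g) (hg ▸ mem_image_of_mem w' hxf)
  rw [overlapProb, if_neg hdisj, hcard, ← if_pos (c := ∀ x ∈ E.biUnion id, w' x ∈ univ.image w)
    (t := p ^ (2 * #F - #E)) (e := 0) himage]
  exact single_le_sum (f := fun E => if ∀ x ∈ E.biUnion id, w' x ∈ univ.image w then
    p ^ (2 * #F - #E) else 0) (fun E _ => by positivity)
    (mem_filter.2 ⟨mem_powerset.2 (filter_subset _ F), hEne⟩)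

variable [Fintype V]

lemma card_filter_forall_mem [DecidableEq β] (U : Finset β) (S : Finset V) :
    #{w : β → V | ∀ x ∈ U, w x ∈ S}
      = #S ^ #U * Fintype.card V ^ (Fintype.card β - #U) := by
  have hpi : ({w : β → V | ∀ x ∈ U, w x ∈ S} : Finset (β → V))
      = Fintype.piFinset fun x => if x ∈ U then S else univ := by
    ext w
    simp only [mem_filter_univ, Fintype.mem_piFinset]
    exact forall_congr' fun x => by by_cases hx : x ∈ U <;> simp [hx]
  rw [hpi, Fintype.card_piFinset, ← prod_mul_prod_compl U, prod_congr rfl fun x hx => by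
    rw [if_pos hx], prod_congr (s₁ := Uᶜ) rfl fun x hx => by rw [if_neg (mem_compl.1 hx)],
    prod_const, prod_const, card_compl, card_univ]

lemma sum_ite_forall_mem_mul_Phi_le [DecidableEq β] (h0 : 0 ≤ p) (I : Finset (β → V))
    {E : Finset (Finset β)} (hEF : E ⊆ F) (hE : E.Nonempty) {S : Finset V}
    (hS : #S ≤ Fintype.card β) :
    (∑ w ∈ I, if ∀ x ∈ E.biUnion id, w x ∈ S then p ^ (2 * #F - #E) else 0)
        * Phi (Fintype.card V) p F
      ≤ Fintype.card β ^ Fintype.card β * (Fintype.card V ^ Fintype.card β * p ^ (2 * #F)) := by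
  set b := Fintype.card β
  set n := Fintype.card V
  set u := #(E.biUnion id)
  have hub : u ≤ b := card_le_univ _
  have hEF' : #E ≤ 2 * #F := (card_le_card hEF).trans (Nat.le_mul_of_pos_left _ two_pos)
  have hpow : #S ^ u ≤ b ^ b := by
    refine (Nat.pow_le_pow_left hS u).trans ?_
    rcases b.eq_zero_or_pos with hb | hb
    · rw [Nat.eq_zero_of_le_zero (hub.trans_eq hb), hb]
    · exact Nat.pow_le_pow_right hb hub
  have hcount : #{w ∈ I | ∀ x ∈ E.biUnion id, w x ∈ S} ≤ b ^ b * n ^ (b - u) := calc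
    _ ≤ #{w : β → V | ∀ x ∈ E.biUnion id, w x ∈ S} :=
      card_le_card (filter_subset_filter _ (subset_univ I))
    _ = #S ^ u * n ^ (b - u) := card_filter_forall_mem _ S
    _ ≤ b ^ b * n ^ (b - u) := by gcongr
  rw [← sum_filter, sum_const, nsmul_eq_mul]
  calc (#{w ∈ I | ∀ x ∈ E.biUnion id, w x ∈ S} : ℝ) * p ^ (2 * #F - #E) * Phi n p F
      ≤ ((b ^ b * n ^ (b - u) : ℕ) : ℝ) * p ^ (2 * #F - #E) * ((n : ℝ) ^ u * p ^ #E) := by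
        gcongr
        · exact Phi_nonneg h0 n F
        · exact Phi_le h0 n hEF hE
    _ = (b : ℝ) ^ b * ((n : ℝ) ^ (b - u + u) * p ^ (2 * #F - #E + #E)) := by
        push_cast
        ring
    _ = (b : ℝ) ^ b * ((n : ℝ) ^ b * p ^ (2 * #F)) := by
        rw [Nat.sub_add_cancel hub, Nat.sub_add_cancel hEF']

lemma sum_overlapProb_copyEdges_mul_Phi_le (h0 : 0 ≤ p) {I : Finset (β → V)}
    (hI : ∀ w ∈ I, w.Injective) {w : β → V} (hw : w.Injective) :
    (∑ w' ∈ I, overlapProb p (copyEdges F) w w') * Phi (Fintype.card V) p F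
      ≤ 2 ^ #F * Fintype.card β ^ Fintype.card β
        * (Fintype.card V ^ Fintype.card β * p ^ (2 * #F)) := by
  set B : ℝ := Fintype.card β ^ Fintype.card β * (Fintype.card V ^ Fintype.card β * p ^ (2 * #F))
  have hPhi : 0 ≤ Phi (Fintype.card V) p F := Phi_nonneg h0 _ F
  calc (∑ w' ∈ I, overlapProb p (copyEdges F) w w') * Phi (Fintype.card V) p F
      ≤ (∑ w' ∈ I, ∑ E ∈ F.powerset with E.Nonempty,
          if ∀ x ∈ E.biUnion id, w' x ∈ univ.image w then p ^ (2 * #F - #E) else 0)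
          * Phi (Fintype.card V) p F := by
        gcongr with w' hw'
        exact overlapProb_copyEdges_le h0 hw (hI w' hw')
    _ ≤ ∑ E ∈ F.powerset with E.Nonempty, B := by
        rw [sum_comm, sum_mul]
        gcongr with E hE
        rw [mem_filter, mem_powerset] at hE
        exact sum_ite_forall_mem_mul_Phi_le h0 I hE.1 hE.2 (card_image_le.trans_eq card_univ)
    _ ≤ 2 ^ #F * B := by
        rw [sum_const, nsmul_eq_mul]
        gcongr
        exact_mod_cast (card_filter_le _ _).trans_eq (card_powerset F)
    _ = _ := (mul_assoc _ _ _).symm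

theorem randomSubsetProb_avoids_copyEdges_le {Ω : Finset (Finset V)} (h0 : 0 < p) (h1 : p ≤ 1)
    {I : Finset (β → V)} (hI : ∀ w ∈ I, w.Injective) (hΩ : ∀ w ∈ I, copyEdges F w ⊆ Ω) :
    randomSubsetProb Ω p (Avoids (copyEdges F) I) ≤
      Real.exp (-(#I / Fintype.card V ^ Fintype.card β * Phi (Fintype.card V) p F
        / (4 * (2 ^ #F * Fintype.card β ^ Fintype.card β)))) := by
  set K : ℝ := 2 ^ #F * Fintype.card β ^ Fintype.card β
  set N : ℝ := Fintype.card V ^ Fintype.card β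
  rcases (Phi_nonneg h0.le (Fintype.card V) F).eq_or_lt with hPhi | hPhi
  · simpa [← hPhi] using randomSubsetProb_le_one h0.le h1 _
  rcases I.eq_empty_or_nonempty with rfl | hIne
  · simpa using randomSubsetProb_le_one h0.le h1 _
  have hIpos : 0 < (#I : ℝ) := by exact_mod_cast hIne.card_pos
  have hIN : (#I : ℝ) ≤ N :=
    (Nat.cast_le.2 (card_le_univ I)).trans_eq (by rw [Fintype.card_fun, Nat.cast_pow])
  have hN : 0 < N := hIpos.trans_le hIN
  have hD : ∑ w ∈ I, ∑ w' ∈ I, overlapProb p (copyEdges F) w w'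
      ≤ #I * (K * (N * p ^ (2 * #F)) / Phi (Fintype.card V) p F) := by
    rw [← nsmul_eq_mul, ← sum_const]
    gcongr with w hw
    exact (le_div_iff₀ hPhi).2 (sum_overlapProb_copyEdges_mul_Phi_le h0.le hI (hI w hw))
  refine (janson_inequality h0.le h1 hΩ hD).trans_eq ?_
  rw [sum_congr rfl fun w hw => by rw [card_copyEdges F (hI w hw)], sum_const, nsmul_eq_mul]
  congr 2
  field_simp
  ring

end HypergraphCopies

section Counting

variable {β V : Type*} [Fintype β] [DecidableEq β] [Fintype V] [DecidableEq V]

lemma card_filter_apply_eq_apply_le {x y : β} (hxy : x ≠ y) :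
    #{w : β → V | w x = w y} ≤ Fintype.card V ^ (Fintype.card β - 1) := by
  have hcard : #(univ : Finset ({z : β // z ≠ y} → V))
      = Fintype.card V ^ (Fintype.card β - 1) := by
    simp [Fintype.card_subtype_compl]
  rw [← hcard]
  refine card_le_card_of_injOn (fun w z => w z) (fun _ _ => mem_coe.2 (mem_univ _)) ?_
  intro w hw w' hw' h
  rw [mem_coe, mem_filter_univ] at hw hw'
  have hne : ∀ z, z ≠ y → w z = w' z := fun z hz => congrFun h ⟨z, hz⟩
  ext z
  rcases eq_or_ne z y with rfl | hz
  · rw [← hw, ← hw', hne x hxy]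
  · exact hne z hz

lemma card_filter_not_injective_le :
    #{w : β → V | ¬ w.Injective}
      ≤ Fintype.card β ^ 2 * Fintype.card V ^ (Fintype.card β - 1) := by
  have hcover : ({w : β → V | ¬ w.Injective} : Finset _)
      ⊆ (univ : Finset β).offDiag.biUnion fun x => {w : β → V | w x.1 = w x.2} := by
    intro w hw
    obtain ⟨x, y, hxy, hne⟩ := Function.not_injective_iff.1 ((mem_filter_univ w).1 hw)
    exact mem_biUnion.2 ⟨(x, y), by simpa using hne, by simpa using hxy⟩
  calc #{w : β → V | ¬ w.Injective}
      ≤ ∑ x ∈ (univ : Finset β).offDiag, #{w : β → V | w x.1 = w x.2} :=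
        (card_le_card hcover).trans card_biUnion_le
    _ ≤ #(univ : Finset β).offDiag * Fintype.card V ^ (Fintype.card β - 1) :=
        sum_le_card_nsmul _ _ _ fun x hx => card_filter_apply_eq_apply_le (mem_offDiag.1 hx).2.2
    _ ≤ Fintype.card β ^ 2 * Fintype.card V ^ (Fintype.card β - 1) := by
        rw [offDiag_card, card_univ, sq]
        gcongr
        exact Nat.sub_le _ _

end Counting

section ConnectingTuples

variable {n ℓ : ℕ} {𝓕 : Finset (Finset (Fin n))}

lemma firstEnd_concat3 {m r : ℕ} (A : Fin ℓ → Fin n) (M : Fin m → Fin n) (B : Fin r → Fin n) :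
    firstEnd ℓ (concat3 A M B) = univ.image A := by
  ext v
  simp only [firstEnd, mem_image, mem_filter_univ, mem_univ, true_and]
  constructor
  · rintro ⟨i, hi, rfl⟩
    exact ⟨⟨i, hi⟩, by simp [concat3, hi]⟩
  · rintro ⟨i, rfl⟩
    exact ⟨⟨i, by omega⟩, i.2, by simp [concat3]⟩

lemma lastEnd_concat3 {q m : ℕ} (A : Fin q → Fin n) (M : Fin m → Fin n) (B : Fin ℓ → Fin n) :
    lastEnd ℓ (concat3 A M B) = univ.image B := by
  ext v
  simp only [lastEnd, mem_image, mem_filter_univ, mem_univ, true_and, Nat.add_sub_cancel]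
  constructor
  · rintro ⟨i, hi, rfl⟩
    exact ⟨⟨i - (q + m), by omega⟩, by
      rw [concat3, dif_neg (by omega), dif_neg (by omega)]⟩
  · rintro ⟨i, rfl⟩
    exact ⟨⟨q + m + i, by omega⟩, Nat.le_add_right _ _, by
      simp [concat3, show ¬ q + m + (i : ℕ) < q by omega]⟩

/-- The `b`-tuples of vertices, with possible repetitions, whose two `ℓ`-ends belong to `𝓕` and
whose remaining entries belong to `Vs`. -/
def connectingTuples (ℓ b : ℕ) (𝓕 : Finset (Finset (Fin n))) (Vs : Finset (Fin n)) :
    Finset (Fin b → Fin n) :=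
  {w | firstEnd ℓ w ∈ 𝓕 ∧ lastEnd ℓ w ∈ 𝓕 ∧ ∀ i : Fin b, ℓ ≤ (i : ℕ) → (i : ℕ) < b - ℓ → w i ∈ Vs}

lemma concat3_mem_connectingTuples {m : ℕ} {Vs : Finset (Fin n)} {A B : Fin ℓ → Fin n}
    {M : Fin m → Fin n} (hA : univ.image A ∈ 𝓕) (hM : ∀ i, M i ∈ Vs) (hB : univ.image B ∈ 𝓕) :
    concat3 A M B ∈ connectingTuples ℓ (ℓ + m + ℓ) 𝓕 Vs := by
  rw [connectingTuples, mem_filter_univ, firstEnd_concat3, lastEnd_concat3]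
  refine ⟨hA, hB, fun i hi hi' => ?_⟩
  rw [concat3, dif_neg (by omega), dif_pos (by omega)]
  exact hM _

lemma card_mul_card_mul_pow_le_card_connectingTuples (h𝓕 : ∀ S ∈ 𝓕, #S = ℓ) (m : ℕ)
    (Vs : Finset (Fin n)) :
    #𝓕 * #𝓕 * #Vs ^ m ≤ #(connectingTuples ℓ (ℓ + m + ℓ) 𝓕 Vs) := by
  have hcard : #𝓕 * #𝓕 * #Vs ^ m
      = #((𝓕 ×ˢ 𝓕) ×ˢ Fintype.piFinset fun _ : Fin m => Vs) := by
    simp [card_product, Fintype.card_piFinset]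
  rw [hcard]
  refine card_le_card_of_surjOn (fun w => ((firstEnd ℓ w, lastEnd ℓ w),
    fun i : Fin m => w ⟨ℓ + i, by omega⟩)) ?_
  rintro ⟨⟨S, S'⟩, M⟩ hx
  simp only [mem_coe, mem_product, Fintype.mem_piFinset] at hx
  obtain ⟨⟨hS, hS'⟩, hM⟩ := hx
  have himage : ∀ S (hS : S ∈ 𝓕), univ.image (S.orderEmbOfFin (h𝓕 S hS)) = S :=
    fun S hS => image_orderEmbOfFin_univ S (h𝓕 S hS)
  refine ⟨concat3 (S.orderEmbOfFin (h𝓕 S hS)) M (S'.orderEmbOfFin (h𝓕 S' hS')),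
    mem_coe.2 (concat3_mem_connectingTuples ((himage S hS).symm ▸ hS) hM
      ((himage S' hS').symm ▸ hS')), ?_⟩
  simp [firstEnd_concat3, lastEnd_concat3, himage S hS, himage S' hS', concat3]

lemma le_card_injective_connectingTuples (h𝓕 : ∀ S ∈ 𝓕, #S = ℓ) {b : ℕ} (hℓ : 1 ≤ ℓ)
    (hb : 2 * ℓ ≤ b) {Vs : Finset (Fin n)} {γ : ℝ} (hγ : 0 ≤ γ) (hVs : γ * n ≤ #Vs)
    (h𝓕γ : γ * n ^ ℓ ≤ #𝓕) (hn : 2 * (b : ℝ) ^ 2 ≤ γ ^ (b - 2 * ℓ + 2) * n) :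
    γ ^ (b - 2 * ℓ + 2) / 2 * n ^ b ≤ #{w ∈ connectingTuples ℓ b 𝓕 Vs | w.Injective} := by
  obtain ⟨m, hm⟩ : ∃ m, b = ℓ + m + ℓ := ⟨b - 2 * ℓ, by omega⟩
  rw [show b - 2 * ℓ = m by omega] at hn ⊢
  have hnoninj : #{w ∈ connectingTuples ℓ b 𝓕 Vs | ¬ w.Injective} ≤ b ^ 2 * n ^ (b - 1) := by
    simpa using (card_le_card (filter_subset_filter _ (subset_univ _))).trans
      (card_filter_not_injective_le (β := Fin b) (V := Fin n))
  have hsplit : (#𝓕 : ℝ) * #𝓕 * #Vs ^ m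
      ≤ #{w ∈ connectingTuples ℓ b 𝓕 Vs | w.Injective} + b ^ 2 * n ^ (b - 1) := by
    have hle := card_mul_card_mul_pow_le_card_connectingTuples h𝓕 m Vs
    rw [← hm, ← card_filter_add_card_filter_not (s := connectingTuples ℓ b 𝓕 Vs)
      (fun w => w.Injective)] at hle
    exact_mod_cast hle.trans (Nat.add_le_add_left hnoninj _)
  have hall : γ ^ (m + 2) * n ^ b ≤ (#𝓕 : ℝ) * #𝓕 * #Vs ^ m := calc
    γ ^ (m + 2) * (n : ℝ) ^ b = γ * n ^ ℓ * (γ * n ^ ℓ) * (γ * n) ^ m := by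
      rw [hm, mul_pow]
      ring
    _ ≤ _ := by gcongr
  have hrepeated : (b : ℝ) ^ 2 * n ^ (b - 1) ≤ γ ^ (m + 2) / 2 * n ^ b := calc
    (b : ℝ) ^ 2 * n ^ (b - 1) ≤ γ ^ (m + 2) * n / 2 * n ^ (b - 1) := by
      gcongr
      linarith
    _ = γ ^ (m + 2) / 2 * n ^ b := by
      rw [← mul_pow_sub_one (by omega : b ≠ 0) (n : ℝ)]
      ring
  linarith

end ConnectingTuples

section Paths

variable {n k ℓ a : ℕ}

lemma card_mul_add_le_card_biUnion_Ico {J : Finset ℕ} (d ℓ : ℕ) (hJ : J.Nonempty) :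
    #J * d + ℓ ≤ #(J.biUnion fun i => Ico (i * d) (i * d + (d + ℓ))) := by
  induction J using Finset.induction_on_max with
  | empty => exact absurd hJ not_nonempty_empty
  | insert j J hlt ih =>
    rcases J.eq_empty_or_nonempty with rfl | hJ'
    · simp
    have hnew : Disjoint (J.biUnion fun i => Ico (i * d) (i * d + (d + ℓ)))
        (Ico (j * d + ℓ) (j * d + ℓ + d)) := by
      simp only [disjoint_left, mem_biUnion, mem_Ico]
      rintro x ⟨i, hi, -, hx⟩ ⟨hx', -⟩
      have hij := Nat.mul_le_mul_right d (hlt i hi)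
      rw [Nat.succ_mul] at hij
      omega
    calc #(insert j J) * d + ℓ = #J * d + ℓ + d := by
          rw [card_insert_of_notMem fun hj => (hlt j hj).false]
          ring
      _ ≤ #(J.biUnion fun i => Ico (i * d) (i * d + (d + ℓ)))
          + #(Ico (j * d + ℓ) (j * d + ℓ + d)) := by
          rw [Nat.card_Ico, Nat.add_sub_cancel_left]
          exact Nat.add_le_add_right (ih hJ') d
      _ ≤ #((insert j J).biUnion fun i => Ico (i * d) (i * d + (d + ℓ))) := by
          rw [← card_union_of_disjoint hnew, biUnion_insert, union_comm (Ico _ _)]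
          exact card_le_card (union_subset_union_right (Ico_subset_Ico (by omega) (by omega)))

lemma edgeIdx_eq_Ico (k d x i : ℕ) : edgeIdx k d x i = Ico (x + i * d) (x + i * d + k) := by
  rw [edgeIdx, range_eq_Ico, image_add_left_Ico, add_zero]

/-- The `i`-th edge of the `ℓ`-path of length `a`, as a set of positions along the path. -/
def pathEdge (k ℓ a i : ℕ) : Finset (Fin (a * (k - ℓ) + ℓ)) :=
  {m | (m : ℕ) ∈ edgeIdx k (k - ℓ) 0 i}

/-- The `ℓ`-path of length `a`, as a hypergraph on its positions. -/
def pathEdges (k ℓ a : ℕ) : Finset (Finset (Fin (a * (k - ℓ) + ℓ))) :=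
  (range a).image (pathEdge k ℓ a)

lemma map_valEmbedding_pathEdge {i : ℕ} (hℓk : ℓ ≤ k) (hi : i < a) :
    (pathEdge k ℓ a i).map Fin.valEmbedding
      = Ico (i * (k - ℓ)) (i * (k - ℓ) + (k - ℓ + ℓ)) := by
  have hlast : i * (k - ℓ) + (k - ℓ) ≤ a * (k - ℓ) := by
    rw [← Nat.succ_mul]
    exact Nat.mul_le_mul_right _ hi
  ext m
  simp only [pathEdge, edgeIdx_eq_Ico, zero_add, Nat.sub_add_cancel hℓk, mem_map, mem_filter_univ,
    Fin.valEmbedding_apply]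
  refine ⟨?_, fun hm => ⟨⟨m, ?_⟩, hm, rfl⟩⟩
  · rintro ⟨m, hm, rfl⟩
    exact hm
  · rw [mem_Ico] at hm
    omega

lemma card_eq_of_mem_pathEdges (hℓk : ℓ ≤ k) {f : Finset (Fin (a * (k - ℓ) + ℓ))}
    (hf : f ∈ pathEdges k ℓ a) : #f = k := by
  obtain ⟨i, hi, rfl⟩ := mem_image.1 hf
  rw [← card_map Fin.valEmbedding, map_valEmbedding_pathEdge hℓk (mem_range.1 hi), Nat.card_Ico,
    Nat.add_sub_cancel_left, Nat.sub_add_cancel hℓk]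

lemma card_mul_add_le_card_biUnion_pathEdges (hℓk : ℓ ≤ k)
    {E : Finset (Finset (Fin (a * (k - ℓ) + ℓ)))} (hE : E ⊆ pathEdges k ℓ a) (hEne : E.Nonempty) :
    #E * (k - ℓ) + ℓ ≤ #(E.biUnion id) := by
  obtain ⟨J, hJ, rfl⟩ := subset_image_iff.1 hE
  have hmap : ((J.image (pathEdge k ℓ a)).biUnion id).map Fin.valEmbedding
      = J.biUnion fun i => Ico (i * (k - ℓ)) (i * (k - ℓ) + (k - ℓ + ℓ)) := by
    rw [image_biUnion, map_eq_image, biUnion_image]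
    refine biUnion_congr rfl fun i hi => ?_
    rw [← map_valEmbedding_pathEdge hℓk (mem_range.1 (hJ hi)), map_eq_image, id]
  rw [← card_map Fin.valEmbedding, hmap]
  exact (Nat.add_le_add_right (Nat.mul_le_mul_right _ card_image_le) _).trans
    (card_mul_add_le_card_biUnion_Ico _ _ (image_nonempty.1 hEne))

lemma copyEdges_pathEdges_subset_kSets (hℓk : ℓ ≤ k) {w : Fin (a * (k - ℓ) + ℓ) → Fin n}
    (hw : w.Injective) : copyEdges (pathEdges k ℓ a) w ⊆ kSets n k := by
  intro e he
  obtain ⟨f, hf, rfl⟩ := mem_image.1 he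
  rw [kSets, mem_powersetCard_univ, card_image_of_injective f hw, card_eq_of_mem_pathEdges hℓk hf]

lemma copyEdges_pathEdges_subset_iff {w : Fin (a * (k - ℓ) + ℓ) → Fin n}
    {E : Finset (Finset (Fin n))} :
    copyEdges (pathEdges k ℓ a) w ⊆ E ↔ ∀ i < a, (pathEdge k ℓ a i).image w ∈ E := by
  simp [copyEdges, pathEdges, image_subset_iff]

lemma mul_le_Phi_pathEdges (hℓ : 1 ≤ ℓ) (hℓk : ℓ ≤ k) (ha : 1 ≤ a) (hn : 1 ≤ n) {C p : ℝ}
    (hC : 1 ≤ C) (hp : C * (n : ℝ) ^ (-((k : ℝ) - ℓ) - ((ℓ : ℝ) - 1) / a) ≤ p) :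
    C * n ≤ Phi n p (pathEdges k ℓ a) := by
  have hn1 : (1 : ℝ) ≤ n := by exact_mod_cast hn
  have hn0 : (0 : ℝ) < n := by linarith
  have hp0 : 0 ≤ p := le_trans (by positivity) hp
  have hne : (pathEdges k ℓ a).Nonempty :=
    image_nonempty.2 (nonempty_range_iff.2 (Nat.one_le_iff_ne_zero.1 ha))
  refine le_Phi hp0 hn hne fun E hE hEne => ?_
  have hEa : (#E : ℝ) ≤ a := by
    exact_mod_cast (card_le_card hE).trans (card_image_le.trans_eq (card_range a))
  have hexp : 1 ≤ (ℓ : ℝ) - #E * (((ℓ : ℝ) - 1) / a) := by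
    have hℓ' : (0 : ℝ) ≤ (ℓ : ℝ) - 1 := sub_nonneg.2 (by exact_mod_cast hℓ)
    have := mul_le_mul_of_nonneg_right hEa (div_nonneg hℓ' a.cast_nonneg)
    rw [mul_div_cancel₀ _ (by positivity : (a : ℝ) ≠ 0)] at this
    linarith
  calc C * (n : ℝ) ≤ C ^ #E * (n : ℝ) ^ ((ℓ : ℝ) - #E * (((ℓ : ℝ) - 1) / a)) := by
        gcongr
        · exact le_self_pow₀ hC hEne.card_pos.ne'
        · exact Real.self_le_rpow_of_one_le hn1 hexp
    _ = (n : ℝ) ^ (#E * (k - ℓ) + ℓ)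
          * (C * (n : ℝ) ^ (-((k : ℝ) - ℓ) - ((ℓ : ℝ) - 1) / a)) ^ #E := by
        rw [mul_pow, ← Real.rpow_mul_natCast hn0.le, ← Real.rpow_natCast n, mul_left_comm,
          ← Real.rpow_add hn0]
        push_cast [hℓk]
        ring_nf
    _ ≤ (n : ℝ) ^ #(E.biUnion id) * p ^ #E := by
        gcongr
        exact card_mul_add_le_card_biUnion_pathEdges hℓk hE hEne

end Paths

section Probability

open Filter

variable {n k ℓ a : ℕ} {γ p : ℝ}

lemma gProb_eq_randomSubsetProb (n k : ℕ) (p : ℝ) (A : Finset (Finset (Fin n)) → Prop) :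
    gProb n k p A = randomSubsetProb (kSets n k) p A := by
  simp only [gProb, randomSubsetProb, randomSubsetExpect_apply, sum_filter, mul_ite, mul_one,
    mul_zero]

lemma GoodPath.of_mem_connectingTuples {L : Finset (Finset (Fin n))} {R Vs : Finset (Fin n)}
    {w : Fin (a * (k - ℓ) + ℓ) → Fin n} {E : Finset (Finset (Fin n))}
    (hw : w ∈ connectingTuples ℓ (a * (k - ℓ) + ℓ) (L ∩ R.powersetCard ℓ) Vs) (hinj : w.Injective)
    (hE : copyEdges (pathEdges k ℓ a) w ⊆ E) : GoodPath k ℓ a L R Vs E := by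
  rw [connectingTuples, mem_filter_univ, Nat.add_sub_cancel] at hw
  simp only [mem_inter, mem_powersetCard] at hw
  obtain ⟨⟨hfirstL, hfirstR, -⟩, ⟨hlastL, hlastR, -⟩, hinterior⟩ := hw
  exact ⟨w, ⟨hinj, copyEdges_pathEdges_subset_iff.1 hE⟩, hfirstL, hfirstR, hlastL, hlastR,
    hinterior⟩

/-- The constant `c` for which a good path fails to exist with probability at most
`exp (-(c * Φ))`. It combines the proportion `γ ^ _ / 2` of vertex tuples that are candidates
with the factor `4 * 2 ^ e * v ^ v` from Janson's inequality for a hypergraph with `e` edges and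
`v` vertices. -/
noncomputable def connectingRate (k ℓ a : ℕ) (γ : ℝ) : ℝ :=
  γ ^ (a * (k - ℓ) + ℓ - 2 * ℓ + 2) / 2
    / (4 * (2 ^ #(pathEdges k ℓ a) * ((a * (k - ℓ) + ℓ : ℕ) : ℝ) ^ (a * (k - ℓ) + ℓ)))

lemma connectingRate_pos (hℓ : 1 ≤ ℓ) (hγ : 0 < γ) : 0 < connectingRate k ℓ a γ := by
  have : (0 : ℝ) < ((a * (k - ℓ) + ℓ : ℕ) : ℝ) := by exact_mod_cast (by omega)
  unfold connectingRate
  positivity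

lemma one_sub_exp_le_gProb_goodPath (hℓ : 1 ≤ ℓ) (hℓk : ℓ ≤ k) (ha : ℓ ≤ a * (k - ℓ)) (hγ : 0 ≤ γ)
    (hn : 2 * ((a * (k - ℓ) + ℓ : ℕ) : ℝ) ^ 2 ≤ γ ^ (a * (k - ℓ) + ℓ - 2 * ℓ + 2) * n)
    (hp0 : 0 < p) (hp1 : p ≤ 1) {L : Finset (Finset (Fin n))} {R Vs : Finset (Fin n)}
    (hVs : γ * n ≤ #Vs) (hLR : γ * (n : ℝ) ^ ℓ ≤ #(L ∩ R.powersetCard ℓ)) :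
    1 - Real.exp (-(connectingRate k ℓ a γ * Phi n p (pathEdges k ℓ a)))
      ≤ gProb n k p (GoodPath k ℓ a L R Vs) := by
  set b := a * (k - ℓ) + ℓ
  set I := {w ∈ connectingTuples ℓ b (L ∩ R.powersetCard ℓ) Vs | w.Injective}
  have hinj : ∀ w ∈ I, w.Injective := fun w hw => (mem_filter.1 hw).2
  have hn0 : (0 : ℝ) < n := by
    by_contra! h
    have : (0 : ℝ) < b := by exact_mod_cast (by omega)
    nlinarith [pow_nonneg hγ (b - 2 * ℓ + 2)]
  have hI : γ ^ (b - 2 * ℓ + 2) / 2 ≤ #I / (n : ℝ) ^ b :=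
    (le_div_iff₀ (by positivity)).2 (le_card_injective_connectingTuples
      (fun S hS => (mem_powersetCard.1 (mem_inter.1 hS).2).2) hℓ (by omega) hγ hVs hLR hn)
  have hjanson := randomSubsetProb_avoids_copyEdges_le (F := pathEdges k ℓ a) hp0 hp1 hinj
    fun w hw => copyEdges_pathEdges_subset_kSets hℓk (hinj w hw)
  rw [gProb_eq_randomSubsetProb, randomSubsetProb_eq_one_sub]
  gcongr
  calc randomSubsetProb (kSets n k) p (fun E => ¬ GoodPath k ℓ a L R Vs E)
      ≤ randomSubsetProb (kSets n k) p (Avoids (copyEdges (pathEdges k ℓ a)) I) :=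
        randomSubsetProb_mono hp0.le hp1 fun E hE w hw hwE =>
          hE (.of_mem_connectingTuples (mem_filter.1 hw).1 (hinj w hw) hwE)
    _ ≤ _ := hjanson
    _ ≤ Real.exp (-(connectingRate k ℓ a γ * Phi n p (pathEdges k ℓ a))) := by
        rw [connectingRate, div_mul_eq_mul_div (γ ^ _ / 2), Fintype.card_fin, Fintype.card_fin]
        have := Phi_nonneg hp0.le n (pathEdges k ℓ a)
        gcongr

lemma four_pow_mul_exp_le (n : ℕ) : (4 : ℝ) ^ n * Real.exp (-(3 * n)) ≤ Real.exp (-n) := by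
  have h4 : (4 : ℝ) ≤ Real.exp 2 := by
    have h2 : (2 : ℝ) ≤ Real.exp 1 := by linarith [Real.add_one_le_exp (1 : ℝ)]
    calc (4 : ℝ) = 2 * 2 := by norm_num
      _ ≤ Real.exp 1 * Real.exp 1 := by gcongr
      _ = Real.exp 2 := by rw [← Real.exp_add, one_add_one_eq_two]
  calc (4 : ℝ) ^ n * Real.exp (-(3 * n)) ≤ Real.exp 2 ^ n * Real.exp (-(3 * n)) := by gcongr
    _ = Real.exp (-n) := by
      rw [← Real.exp_nat_mul, ← Real.exp_add]
      ring_nf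

lemma one_sub_exp_le_gProb_forall_pair (hp0 : 0 ≤ p) (hp1 : p ≤ 1)
    {P : Finset (Fin n) → Finset (Fin n) → Prop}
    {A : Finset (Fin n) → Finset (Fin n) → Finset (Finset (Fin n)) → Prop}
    (hA : ∀ R S, P R S → 1 - Real.exp (-(3 * n)) ≤ gProb n k p (A R S)) :
    1 - Real.exp (-n) ≤ gProb n k p (fun E => ∀ R S, P R S → A R S E) := by
  set J : Finset (Finset (Fin n) × Finset (Fin n)) := {x | P x.1 x.2}
  have hJ : (#J : ℝ) ≤ 4 ^ n := by
    have : #J ≤ 2 ^ n * 2 ^ n := (card_le_univ J).trans_eq (by simp)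
    rw [← mul_pow] at this
    exact_mod_cast this
  have hunion := le_randomSubsetProb_forall_mem (Ω := kSets n k) (J := J) hp0 hp1
    fun x hx => (hA x.1 x.2 ((mem_filter_univ x).1 hx)).trans_eq (gProb_eq_randomSubsetProb ..)
  calc 1 - Real.exp (-n) ≤ 1 - #J * Real.exp (-(3 * n)) := by
        gcongr
        exact le_trans (by gcongr) (four_pow_mul_exp_le n)
    _ ≤ _ := hunion
    _ ≤ gProb n k p (fun E => ∀ R S, P R S → A R S E) := by
        rw [gProb_eq_randomSubsetProb]
        exact randomSubsetProb_mono hp0 hp1 fun E hE R S h => hE (R, S) ((mem_filter_univ _).2 h)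

lemma eventually_mul_rpow_le_rpow (C : ℝ) {s t : ℝ} (hst : s < t) :
    ∀ᶠ n : ℕ in atTop, C * (n : ℝ) ^ s ≤ (n : ℝ) ^ t := by
  have hlarge := ((tendsto_rpow_atTop (sub_pos.2 hst)).comp
    tendsto_natCast_atTop_atTop).eventually_ge_atTop C
  filter_upwards [hlarge, eventually_gt_atTop 0] with n hC hn
  have hn0 : (0 : ℝ) < n := by exact_mod_cast hn
  calc C * (n : ℝ) ^ s ≤ (n : ℝ) ^ (t - s) * (n : ℝ) ^ s := by gcongr; exact hC
    _ = (n : ℝ) ^ t := by rw [← Real.rpow_add hn0, sub_add_cancel]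

lemma lt_sub_one_div_of_le_div_three_mul {ε : ℝ} (ha : 1 ≤ a) (hε : ε ≤ (ℓ : ℝ) / (3 * a))
    (hℓ : 2 ≤ ℓ) : ε < ((ℓ : ℝ) - 1) / a := by
  have : (0 : ℝ) < a := by exact_mod_cast ha
  have hℓ' : (2 : ℝ) ≤ ℓ := by exact_mod_cast hℓ
  calc ε ≤ (ℓ : ℝ) / 3 / a := by rwa [div_div]
    _ < ((ℓ : ℝ) - 1) / a := by
      gcongr
      linarith

lemma eventually_mul_rpow_le_density {ε : ℝ} (hε : 2 ≤ ℓ → ε < ((ℓ : ℝ) - 1) / a) (hℓ : 1 ≤ ℓ)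
    (C₀ : ℝ) :
    ∀ᶠ n : ℕ in atTop, ∀ C ≥ C₀, ∀ p : ℝ,
      ((2 ≤ ℓ → (n : ℝ) ^ (-((k : ℝ) - ℓ) - ε) ≤ p) ∧
        (ℓ = 1 → C * (n : ℝ) ^ (-((k : ℝ) - 1)) ≤ p)) →
      C₀ * (n : ℝ) ^ (-((k : ℝ) - ℓ) - ((ℓ : ℝ) - 1) / a) ≤ p := by
  rcases hℓ.eq_or_lt with rfl | hℓ2
  · refine .of_forall fun n C hC p hp => le_trans ?_ (hp.2 rfl)
    rw [Nat.cast_one, sub_self, zero_div, sub_zero]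
    gcongr
  · filter_upwards [eventually_mul_rpow_le_rpow C₀ (sub_lt_sub_left (hε hℓ2) (-((k : ℝ) - ℓ)))]
      with n hn C _ p hp using hn.trans (hp.1 hℓ2)

end Probability

theorem gnp_contains_connecting_paths_general (k ℓ a : ℕ) (hℓ : 1 ≤ ℓ) (ha : ℓ ≤ a * (k - ℓ))
    (γ : ℝ) (hγ : 0 < γ) :
    ∃ C : ℝ, ∀ᶠ n : ℕ in Filter.atTop, ∀ p : ℝ, p ≤ 1 →
      C * (n : ℝ) ^ (-((k : ℝ) - ℓ) - ((ℓ : ℝ) - 1) / a) ≤ p →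
        ∀ L : Finset (Finset (Fin n)),
          (∀ R Vs : Finset (Fin n), γ * n ≤ #Vs → γ * (n : ℝ) ^ ℓ ≤ #(L ∩ R.powersetCard ℓ) →
            1 - Real.exp (-(3 * n)) ≤ gProb n k p (GoodPath k ℓ a L R Vs)) ∧
          1 - Real.exp (-n) ≤ gProb n k p (fun E =>
            ∀ R Vs : Finset (Fin n), γ * n ≤ #Vs → γ * (n : ℝ) ^ ℓ ≤ #(L ∩ R.powersetCard ℓ) →
              GoodPath k ℓ a L R Vs E) := by
  set c := connectingRate k ℓ a γ
  have hc0 : 0 < c := connectingRate_pos hℓ hγ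
  have hpos : 0 < a * (k - ℓ) := by omega
  have ha0 : 1 ≤ a := Nat.pos_of_mul_pos_right hpos
  have hℓk : ℓ < k := Nat.lt_of_sub_pos (Nat.pos_of_mul_pos_left hpos)
  refine ⟨max 1 (3 / c), ?_⟩
  filter_upwards [Filter.eventually_ge_atTop 1, tendsto_natCast_atTop_atTop.eventually_ge_atTop
    (2 * ((a * (k - ℓ) + ℓ : ℕ) : ℝ) ^ 2 / γ ^ (a * (k - ℓ) + ℓ - 2 * ℓ + 2))]
    with n hn1 hnlarge p hp1 hp L
  have hp0 : 0 < p := lt_of_lt_of_le (by positivity) hp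
  have hPhi : 3 * n ≤ c * Phi n p (pathEdges k ℓ a) := calc
    (3 : ℝ) * n = c * (3 / c * n) := by field_simp
    _ ≤ c * (max 1 (3 / c) * n) := by gcongr; exact le_max_right ..
    _ ≤ c * Phi n p (pathEdges k ℓ a) := by
      gcongr
      exact mul_le_Phi_pathEdges hℓ hℓk.le ha0 hn1 (le_max_left ..) hp
  have hpair : ∀ R Vs : Finset (Fin n),
      γ * n ≤ #Vs ∧ γ * (n : ℝ) ^ ℓ ≤ #(L ∩ R.powersetCard ℓ) →
      1 - Real.exp (-(3 * n)) ≤ gProb n k p (GoodPath k ℓ a L R Vs) := fun R Vs h =>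
    le_trans (by gcongr) (one_sub_exp_le_gProb_goodPath hℓ hℓk.le ha hγ.le
      ((div_le_iff₀' (by positivity)).1 hnlarge) hp0 hp1 h.1 h.2)
  exact ⟨fun R Vs hVs hLR => hpair R Vs ⟨hVs, hLR⟩, by
    simpa only [and_imp] using one_sub_exp_le_gProb_forall_pair hp0.le hp1 hpair⟩

/-- Lemma 2.2(1). -/
theorem gnp_contains_connecting_paths
    (k ℓ a : ℕ) (hk : 3 ≤ k) (hl1 : 1 ≤ ℓ) (hlk : ℓ ≤ k - 1)
    (ha1 : 1 ≤ a) (ha2 : ℓ ≤ a * (k - ℓ))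
    (ε : ℝ) (hε0 : 0 < ε) (hε : ε ≤ (ℓ : ℝ) / (3 * (a : ℝ)))
    (γ : ℝ) (hγ : 0 < γ) :
    ∃ C₀ : ℕ, ∀ C : ℕ, C₀ ≤ C →
      ∀ δ : ℝ, 0 < δ → ∃ n₀ : ℕ, ∀ n : ℕ, n₀ ≤ n →
        ∀ p : ℝ, 0 ≤ p → p ≤ 1 →
          ((2 ≤ ℓ → (n : ℝ) ^ (-((k : ℝ) - (ℓ : ℝ)) - ε) ≤ p) ∧
           (ℓ = 1 → (C : ℝ) * (n : ℝ) ^ (-((k : ℝ) - 1)) ≤ p)) →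
        ∀ L : Finset (Finset (Fin n)), (∀ S ∈ L, S.card = ℓ) →
          (∀ R Vs : Finset (Fin n),
              γ * (n : ℝ) ≤ (Vs.card : ℝ) →
              γ * (n : ℝ) ^ ℓ ≤ ((L ∩ R.powersetCard ℓ).card : ℝ) →
              1 - Real.exp (-(3 * (n : ℝ))) ≤
                gProb n k p (fun E => GoodPath k ℓ a L R Vs E)) ∧
          1 - δ ≤ gProb n k p (fun E =>
            ∀ R Vs : Finset (Fin n),
              γ * (n : ℝ) ≤ (Vs.card : ℝ) →
              γ * (n : ℝ) ^ ℓ ≤ ((L ∩ R.powersetCard ℓ).card : ℝ) →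
              GoodPath k ℓ a L R Vs E) := by
  obtain ⟨C₀, hC₀⟩ := gnp_contains_connecting_paths_general k ℓ a hl1 ha2 γ hγ
  refine ⟨⌈C₀⌉₊, fun C hC δ hδ => Filter.eventually_atTop.1 ?_⟩
  have hexp : ∀ᶠ n : ℕ in Filter.atTop, Real.exp (-n) ≤ δ :=
    (Real.tendsto_exp_neg_atTop_nhds_zero.comp tendsto_natCast_atTop_atTop).eventually_le_const hδ
  filter_upwards [hC₀, hexp, eventually_mul_rpow_le_density
    (lt_sub_one_div_of_le_div_three_mul ha1 hε) hl1 C₀] with n hn hnδ hdensity p _ hp1 hp L _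
  obtain ⟨hpair, hall⟩ := hn p hp1 (hdensity C (Nat.ceil_le.1 hC) p hp) L
  exact ⟨hpair, (sub_le_sub_left hnδ 1).trans hall⟩
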